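/- Let n ≥ 2, let κ > 0 and ε > 0, and let D be a compact convex body in Euclidean space ℝⁿ satisfying the R₁,R₂ ball-sandwich condition with R₁ = 1/κ and R₂ = 1/((1+ε)·κ) (i.e. D is a κ,(1+ε)κ-convex domain). Then there exist a point o ∈ ℝⁿ and reals r, R with 0 < r ≤ R such that Metric.closedBall o r ⊆ D ⊆ Metric.closedBall o R and R/r − 1 < (√2 − 1)·ε. -/

import Mathlib

/-!
Let `K` be the set of centres of the balls of radius `R₂` contained in `D`, and let `o` and `ρ` be
the centre and the radius of the smallest ball containing `K`. Every ball of radius `R₁` containing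
`D`, with centre `x` say, confines `K` to the ball of radius `R₁ - R₂` around `x`. Since squared
distances are strongly convex, minimality of `o` then gives `ρ² + |o - x|² ≤ (R₁ - R₂)²`. Hence with
`s² = (R₁ - R₂)² - ρ²` the ball of radius `R₁ - s` around `o` lies in each of the balls of radius
`R₁` containing `D`, and therefore in their intersection, which is `D`. On the other side, every
boundary point has distance at most `R₂` from `K`, so `D` lies in the ball of radius `R₂ + ρ` around
`o`. The factor `√2` is the bound `ρ + s ≤ √2 (R₁ - R₂)`.
-/

section BallSandwich

open AffineMap Bornology Filter Metric Set Topology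

section Frontier

theorem inter_frontier_nonempty_of_isPreconnected {X : Type*} [TopologicalSpace X] {s t : Set X}
    (ht : IsPreconnected t) (hts : (t ∩ s).Nonempty) (hts' : (t ∩ sᶜ).Nonempty) :
    (t ∩ frontier s).Nonempty := by
  by_contra hdisj
  have hfrontier : ∀ x ∈ t, x ∉ frontier s := fun x hx hxs => hdisj ⟨x, hx, hxs⟩
  have hinterior : ∀ x ∈ t, x ∈ closure s → x ∈ interior s := fun x hx hxs =>
    by_contra fun hxi => hfrontier x hx ⟨hxs, hxi⟩
  obtain ⟨x, -, hxi, hxc⟩ := ht (interior s) (closure s)ᶜ isOpen_interior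
    isClosed_closure.isOpen_compl
    (fun x hx => (em (x ∈ closure s)).imp (hinterior x hx) id)
    (hts.imp fun x hx => ⟨hx.1, hinterior x hx.1 (subset_closure hx.2)⟩)
    (hts'.imp fun x hx => ⟨hx.1, fun hxc => hx.2 (interior_subset (hinterior x hx.1 hxc))⟩)
  exact hxc (interior_subset_closure hxi)

theorem sInter_eq_of_forall_mem_frontier {E : Type*} [AddCommGroup E] [Module ℝ E]
    [TopologicalSpace E] [IsTopologicalAddGroup E] [ContinuousSMul ℝ E] {D : Set E}
    (hD : IsClosed D) (hDint : (interior D).Nonempty) {𝒞 : Set (Set E)}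
    (hconv : ∀ C ∈ 𝒞, Convex ℝ C) (hsub : ∀ C ∈ 𝒞, D ⊆ C)
    (hsupp : ∀ p ∈ frontier D, ∃ C ∈ 𝒞, p ∉ interior C) : ⋂₀ 𝒞 = D := by
  refine (subset_sInter hsub).antisymm' fun q hq => by_contra fun hqD => ?_
  obtain ⟨c, hc⟩ := hDint
  obtain ⟨p, hpcq, hp⟩ := inter_frontier_nonempty_of_isPreconnected
    (convex_segment (𝕜 := ℝ) c q).isPreconnected
    ⟨c, left_mem_segment ℝ c q, interior_subset hc⟩ ⟨q, right_mem_segment ℝ c q, hqD⟩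
  have hcp : c ≠ p := fun h => hp.2 (h ▸ hc)
  have hqp : q ≠ p := fun h => hqD (h ▸ hD.frontier_subset hp)
  obtain ⟨C, hC, hpC⟩ := hsupp p hp
  exact hpC ((hconv C hC).openSegment_interior_self_subset_interior
    (interior_mono (hsub C hC) hc) (hq C hC) (mem_openSegment_of_ne_left_right hcp hqp hpcq))

variable {E : Type*} [NormedAddCommGroup E] [NormedSpace ℝ E]

theorem exists_one_le_lineMap_mem_frontier {D : Set E} (hD : IsBounded D) {c q : E} (hcq : c ≠ q)
    (hq : q ∈ D) : ∃ t : ℝ, 1 ≤ t ∧ lineMap c q t ∈ frontier D := by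
  obtain ⟨M, hM⟩ := hD.subset_closedBall c
  obtain ⟨T, hT⟩ := exists_gt (max 1 (M / dist c q))
  have hTD : lineMap c q T ∉ D := fun hmem => by
    have hle : ‖T‖ * dist c q ≤ M := by simpa only [mem_closedBall, dist_lineMap_left] using hM hmem
    rw [← le_div_iff₀ (dist_pos.2 hcq)] at hle
    exact ((le_max_right _ _).trans_lt hT).not_ge ((Real.le_norm_self T).trans hle)
  have hray : IsPreconnected (lineMap c q '' Ici (1 : ℝ)) :=
    isPreconnected_Ici.image _ lineMap_continuous.continuousOn
  obtain ⟨_, ⟨t, ht, rfl⟩, hp⟩ := inter_frontier_nonempty_of_isPreconnected hray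
    ⟨q, ⟨1, self_mem_Ici, lineMap_apply_one c q⟩, hq⟩
    ⟨_, ⟨T, ((le_max_left _ _).trans_lt hT).le, rfl⟩, hTD⟩
  exact ⟨t, ht, hp⟩

theorem subset_convexHull_frontier [Nontrivial E] {D : Set E} (hD : IsBounded D) :
    D ⊆ convexHull ℝ (frontier D) := by
  intro q hq
  obtain ⟨c, hc⟩ : (frontier D).Nonempty :=
    nonempty_frontier_iff.2 ⟨⟨q, hq⟩, fun h => NormedSpace.unbounded_univ ℝ E (h ▸ hD)⟩
  rcases eq_or_ne c q with rfl | hcq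
  · exact subset_convexHull ℝ _ hc
  obtain ⟨t, ht, hp⟩ := exists_one_le_lineMap_mem_frontier hD hcq hq
  have ht₀ : 0 < t := zero_lt_one.trans_le ht
  have hseg : q ∈ segment ℝ c (lineMap c q t) := by
    rw [segment_eq_image_lineMap]
    refine ⟨t⁻¹, ⟨by positivity, inv_le_one_of_one_le₀ ht⟩, ?_⟩
    rw [lineMap_lineMap_right, inv_mul_cancel₀ ht₀.ne', lineMap_apply_one]
  exact (convex_convexHull ℝ _).segment_subset (subset_convexHull ℝ _ hc)
    (subset_convexHull ℝ _ hp) hseg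

end Frontier

section InnerParallelBody

/-- The inner parallel body of `D` at distance `r` (the erosion of `D` by a closed ball): the
centres of the closed balls of radius `r` contained in `D`. -/
def innerParallelBody {E : Type*} [PseudoMetricSpace E] (r : ℝ) (D : Set E) : Set E :=
  {x | closedBall x r ⊆ D}

variable {E : Type*} [NormedAddCommGroup E] [NormedSpace ℝ E] [Nontrivial E]

theorem dist_add_le_of_closedBall_subset_closedBall {x y : E} {a b : ℝ} (hb : 0 ≤ b)
    (h : closedBall y b ⊆ closedBall x a) : dist y x + b ≤ a := by
  obtain ⟨v, hv, hray⟩ : ∃ v : E, ‖v‖ = b ∧ SameRay ℝ (y - x) v := by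
    rcases eq_or_ne y x with rfl | hyx
    · obtain ⟨v, hv⟩ := exists_norm_eq E hb
      exact ⟨v, hv, sub_self y ▸ SameRay.zero_left v⟩
    · have hpos : ‖y - x‖ ≠ 0 := norm_ne_zero_iff.2 (sub_ne_zero.2 hyx)
      refine ⟨(b / ‖y - x‖) • (y - x), ?_, SameRay.sameRay_nonneg_smul_right _ (by positivity)⟩
      rw [norm_smul_of_nonneg (by positivity), div_mul_cancel₀ _ hpos]
  calc dist y x + b = ‖y - x + v‖ := by rw [hray.norm_add, hv, dist_eq_norm]
    _ = dist (y + v) x := by rw [dist_eq_norm, add_sub_right_comm]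
    _ ≤ a := h (by simp [hv])

theorem innerParallelBody_subset_closedBall {D : Set E} {x : E} {a b : ℝ} (hb : 0 ≤ b)
    (h : D ⊆ closedBall x a) : innerParallelBody b D ⊆ closedBall x (a - b) := fun _ hy =>
  le_sub_iff_add_le.2 (dist_add_le_of_closedBall_subset_closedBall hb (Subset.trans hy h))

end InnerParallelBody

section Circumradius

/-- The circumradius of `K`: the infimum of the radii of the closed balls containing `K`. It is `0`
by convention if `K` is empty or unbounded. -/
noncomputable def circumradius {E : Type*} [PseudoMetricSpace E] (K : Set E) : ℝ :=
  sInf {d | ∃ x, K ⊆ closedBall x d}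

section PseudoMetricSpace

variable {E : Type*} [PseudoMetricSpace E] {K : Set E}

theorem zero_mem_lowerBounds_radii (hK : K.Nonempty) :
    0 ∈ lowerBounds {d | ∃ x, K ⊆ closedBall x d} := by
  rintro d ⟨x, hx⟩
  exact nonempty_closedBall.1 (hK.mono hx)

theorem circumradius_nonneg (hK : K.Nonempty) : 0 ≤ circumradius K :=
  Real.sInf_nonneg (zero_mem_lowerBounds_radii hK)

theorem circumradius_le (hK : K.Nonempty) {x : E} {d : ℝ} (h : K ⊆ closedBall x d) :
    circumradius K ≤ d :=
  csInf_le ⟨0, zero_mem_lowerBounds_radii hK⟩ ⟨x, h⟩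

end PseudoMetricSpace

variable {E : Type*} [NormedAddCommGroup E] [InnerProductSpace ℝ E] {K : Set E}

theorem dist_sq_lineMap (y x x' : E) (t : ℝ) :
    dist y (lineMap x x' t) ^ 2 =
      (1 - t) * dist y x ^ 2 + t * dist y x' ^ 2 - t * (1 - t) * dist x x' ^ 2 := by
  have hline : y - lineMap x x' t = (y - x) - t • (x' - x) := by
    rw [lineMap_apply_module']; abel
  have hx' : y - x' = (y - x) - (x' - x) := by abel
  rw [dist_comm x x', dist_eq_norm, dist_eq_norm, dist_eq_norm, dist_eq_norm, hline, hx',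
    norm_sub_sq_real, norm_sub_sq_real (y - x), norm_smul, inner_smul_right, Real.norm_eq_abs,
    mul_pow, sq_abs]
  ring

theorem circumradius_sq_le (hK : K.Nonempty) {x x' : E} {d d' t : ℝ} (h : K ⊆ closedBall x d)
    (h' : K ⊆ closedBall x' d') (ht₀ : 0 ≤ t) (ht₁ : t ≤ 1) :
    circumradius K ^ 2 ≤ (1 - t) * d ^ 2 + t * d' ^ 2 - t * (1 - t) * dist x x' ^ 2 := by
  set w := (1 - t) * d ^ 2 + t * d' ^ 2 - t * (1 - t) * dist x x' ^ 2
  have hdist : ∀ y ∈ K, dist y (lineMap x x' t) ^ 2 ≤ w := fun y hy => by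
    have hyx : dist y x ≤ d := h hy
    have hyx' : dist y x' ≤ d' := h' hy
    have : 0 ≤ 1 - t := sub_nonneg.2 ht₁
    rw [dist_sq_lineMap]
    simp only [w]
    gcongr
  have hw : 0 ≤ w := hK.elim fun y hy => (sq_nonneg _).trans (hdist y hy)
  rw [← Real.le_sqrt (circumradius_nonneg hK) hw]
  exact circumradius_le hK fun y hy => Real.le_sqrt_of_sq_le (hdist y hy)

theorem circumradius_sq_add_dist_sq_le (hK : K.Nonempty) {o x : E} {d : ℝ}
    (ho : K ⊆ closedBall o (circumradius K)) (hx : K ⊆ closedBall x d) :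
    circumradius K ^ 2 + dist o x ^ 2 ≤ d ^ 2 := by
  have hle : ∀ t ∈ Ioc (0 : ℝ) 1, circumradius K ^ 2 + (1 - t) * dist o x ^ 2 ≤ d ^ 2 := by
    rintro t ⟨ht₀, ht₁⟩
    have hline := circumradius_sq_le hK ho hx ht₀.le ht₁
    refine le_of_mul_le_mul_left ?_ ht₀
    linarith
  have hlim : Tendsto (fun t : ℝ => circumradius K ^ 2 + (1 - t) * dist o x ^ 2) (𝓝[>] 0)
      (𝓝 (circumradius K ^ 2 + (1 - 0) * dist o x ^ 2)) :=
    Continuous.continuousWithinAt (by fun_prop)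
  rw [sub_zero, one_mul] at hlim
  exact le_of_tendsto hlim (mem_of_superset (Ioc_mem_nhdsGT zero_lt_one) hle)

theorem dist_sq_le_of_subset_closedBall (hK : K.Nonempty) {x x' : E} {d : ℝ}
    (h : K ⊆ closedBall x d) (h' : K ⊆ closedBall x' d) :
    dist x x' ^ 2 ≤ 4 * (d ^ 2 - circumradius K ^ 2) := by
  have hmid := circumradius_sq_le hK h h' one_half_pos.le one_half_lt_one.le
  linarith

theorem exists_subset_closedBall_circumradius [CompleteSpace E] (hK : K.Nonempty)
    (hKb : IsBounded K) : ∃ o, K ⊆ closedBall o (circumradius K) := by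
  obtain ⟨d, hd_anti, hd_lim, hd⟩ : ∃ d : ℕ → ℝ, Antitone d ∧
      Tendsto d atTop (𝓝 (circumradius K)) ∧ ∀ n, ∃ x, K ⊆ closedBall x (d n) :=
    exists_seq_tendsto_sInf ((hKb.subset_closedBall 0).imp fun _ h => ⟨0, h⟩)
      ⟨0, zero_mem_lowerBounds_radii hK⟩
  choose x hx using hd
  have hcauchy : CauchySeq x := by
    refine cauchySeq_of_le_tendsto_0 (fun N => √(4 * (d N ^ 2 - circumradius K ^ 2)))
      (fun n m N hn hm => Real.le_sqrt_of_sq_le ?_) ?_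
    · exact dist_sq_le_of_subset_closedBall hK
        ((hx n).trans (closedBall_subset_closedBall (hd_anti hn)))
        ((hx m).trans (closedBall_subset_closedBall (hd_anti hm)))
    · have hlim : Tendsto (fun N => √(4 * (d N ^ 2 - circumradius K ^ 2))) atTop
          (𝓝 √(4 * (circumradius K ^ 2 - circumradius K ^ 2))) :=
        (((hd_lim.pow 2).sub_const _).const_mul 4).sqrt
      rwa [sub_self, mul_zero, Real.sqrt_zero] at hlim
  obtain ⟨o, ho⟩ := cauchySeq_tendsto_of_complete hcauchy
  exact ⟨o, fun y hy => le_of_tendsto_of_tendsto' (tendsto_const_nhds.dist ho) hd_lim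
    fun n => hx n hy⟩

end Circumradius

/-- The `R₁, R₂` ball-sandwich condition: through every boundary point `p` of `D` pass a sphere of
radius `R₁` enclosing `D` and a sphere of radius `R₂` enclosed by `D`. By Blaschke's rolling theorem
it characterizes `κ₁, κ₂`-convex domains, where `κᵢ = 1 / Rᵢ`. -/
def IsBallSandwiched {E : Type*} [PseudoMetricSpace E] (R₁ R₂ : ℝ) (D : Set E) : Prop :=
  ∀ p ∈ frontier D, ∃ x₁ x₂ : E,
    dist x₁ p = R₁ ∧ dist x₂ p = R₂ ∧ closedBall x₂ R₂ ⊆ D ∧ D ⊆ closedBall x₁ R₁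

namespace IsBallSandwiched

section PseudoMetricSpace

variable {E : Type*} [PseudoMetricSpace E] {R₁ R₂ : ℝ} {D : Set E}

theorem exists_subset_closedBall (h : IsBallSandwiched R₁ R₂ D) (hD : (frontier D).Nonempty) :
    ∃ x, D ⊆ closedBall x R₁ :=
  let ⟨p, hp⟩ := hD
  let ⟨x₁, _, _, _, _, hx₁⟩ := h p hp
  ⟨x₁, hx₁⟩

theorem innerParallelBody_nonempty (h : IsBallSandwiched R₁ R₂ D) (hD : (frontier D).Nonempty) :
    (innerParallelBody R₂ D).Nonempty :=
  let ⟨p, hp⟩ := hD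
  let ⟨_, x₂, _, _, hx₂, _⟩ := h p hp
  ⟨x₂, hx₂⟩

end PseudoMetricSpace

section NormedSpace

variable {E : Type*} [NormedAddCommGroup E] [NormedSpace ℝ E] [Nontrivial E] {R₁ R₂ : ℝ} {D : Set E}

theorem subset_closedBall_add (h : IsBallSandwiched R₁ R₂ D) (hD : IsBounded D) {o : E} {ρ : ℝ}
    (ho : innerParallelBody R₂ D ⊆ closedBall o ρ) : D ⊆ closedBall o (R₂ + ρ) := by
  refine (subset_convexHull_frontier hD).trans (convexHull_min (fun p hp => ?_)
    (convex_closedBall o _))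
  obtain ⟨_, x₂, _, hx₂p, hx₂, _⟩ := h p hp
  calc dist p o ≤ dist x₂ p + dist x₂ o := dist_triangle_left p o x₂
    _ ≤ R₂ + ρ := add_le_add hx₂p.le (ho hx₂)

theorem sInter_closedBall_eq (h : IsBallSandwiched R₁ R₂ D) (hD : IsClosed D)
    (hDint : (interior D).Nonempty) :
    ⋂₀ {C | ∃ x, D ⊆ closedBall x R₁ ∧ C = closedBall x R₁} = D := by
  refine sInter_eq_of_forall_mem_frontier hD hDint ?_ ?_ fun p hp => ?_
  · rintro _ ⟨x, _, rfl⟩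
    exact convex_closedBall x R₁
  · rintro _ ⟨x, hx, rfl⟩
    exact hx
  · obtain ⟨x₁, _, hx₁p, _, _, hx₁⟩ := h p hp
    refine ⟨_, ⟨x₁, hx₁, rfl⟩, ?_⟩
    rw [interior_closedBall', mem_ball', hx₁p]
    exact lt_irrefl R₁

theorem closedBall_sub_subset (h : IsBallSandwiched R₁ R₂ D) (hD : IsClosed D)
    (hDint : (interior D).Nonempty) {o : E} {s : ℝ}
    (ho : ∀ x, D ⊆ closedBall x R₁ → dist o x ≤ s) : closedBall o (R₁ - s) ⊆ D := by
  rw [← h.sInter_closedBall_eq hD hDint]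
  rintro q hq _ ⟨x, hx, rfl⟩
  exact closedBall_subset_closedBall' (by linarith [ho x hx]) hq

end NormedSpace

theorem exists_closedBall_subset_subset_closedBall {E : Type*} [NormedAddCommGroup E]
    [InnerProductSpace ℝ E] [CompleteSpace E] [Nontrivial E] {R₁ R₂ : ℝ} {D : Set E}
    (h : IsBallSandwiched R₁ R₂ D) (hR₂ : 0 < R₂) (hD : IsClosed D)
    (hDfr : (frontier D).Nonempty) :
    ∃ (o : E) (ρ s : ℝ), 0 ≤ ρ ∧ 0 ≤ s ∧ ρ ^ 2 + s ^ 2 = (R₁ - R₂) ^ 2 ∧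
      closedBall o (R₁ - s) ⊆ D ∧ D ⊆ closedBall o (R₂ + ρ) := by
  set K := innerParallelBody R₂ D
  obtain ⟨x₀, hx₀⟩ := h.exists_subset_closedBall hDfr
  have hDb : IsBounded D := isBounded_closedBall.subset hx₀
  have hK : K.Nonempty := h.innerParallelBody_nonempty hDfr
  have hDint : (interior D).Nonempty :=
    hK.imp fun y hy => interior_mono hy (ball_subset_interior_closedBall (mem_ball_self hR₂))
  have hK_sub : ∀ x, D ⊆ closedBall x R₁ → K ⊆ closedBall x (R₁ - R₂) := fun x hx =>
    innerParallelBody_subset_closedBall hR₂.le hx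
  obtain ⟨o, ho⟩ := exists_subset_closedBall_circumradius hK
    (isBounded_closedBall.subset (hK_sub x₀ hx₀))
  have hcentre : ∀ x, D ⊆ closedBall x R₁ →
      circumradius K ^ 2 + dist o x ^ 2 ≤ (R₁ - R₂) ^ 2 := fun x hx =>
    circumradius_sq_add_dist_sq_le hK ho (hK_sub x hx)
  have hs : 0 ≤ (R₁ - R₂) ^ 2 - circumradius K ^ 2 := by
    linarith [hcentre x₀ hx₀, sq_nonneg (dist o x₀)]
  refine ⟨o, circumradius K, √((R₁ - R₂) ^ 2 - circumradius K ^ 2), circumradius_nonneg hK,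
    Real.sqrt_nonneg _, by rw [Real.sq_sqrt hs]; ring, ?_, h.subset_closedBall_add hDb ho⟩
  exact h.closedBall_sub_subset hD hDint fun x hx =>
    Real.le_sqrt_of_sq_le (by linarith [hcentre x hx])

end IsBallSandwiched

theorem le_add_of_sq_add_sq_eq {ρ s δ : ℝ} (hρ : 0 ≤ ρ) (hs : 0 ≤ s)
    (h : ρ ^ 2 + s ^ 2 = δ ^ 2) : δ ≤ ρ + s :=
  le_of_sq_le_sq (by nlinarith [mul_nonneg hρ hs]) (add_nonneg hρ hs)

theorem add_le_sqrt_two_mul_of_sq_add_sq_eq {ρ s δ : ℝ} (hδ : 0 ≤ δ)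
    (h : ρ ^ 2 + s ^ 2 = δ ^ 2) : ρ + s ≤ √2 * δ := by
  refine le_of_sq_le_sq ?_ (by positivity)
  calc (ρ + s) ^ 2 ≤ 2 * (ρ ^ 2 + s ^ 2) := add_sq_le
    _ = (√2 * δ) ^ 2 := by rw [h, mul_pow, Real.sq_sqrt zero_le_two]

theorem add_div_add_sub_sub_one_lt {b ρ s δ : ℝ} (hb : 0 < b) (hδ : 0 < δ)
    (h : ρ ^ 2 + s ^ 2 = δ ^ 2) :
    (b + ρ) / (b + δ - s) - 1 < (√2 - 1) * (δ / b) := by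
  have hsδ : s ≤ δ := le_of_sq_le_sq (by linarith [sq_nonneg ρ]) hδ.le
  have hnum : ρ + s - δ ≤ (√2 - 1) * δ := by
    linarith [add_le_sqrt_two_mul_of_sq_add_sq_eq hδ.le h]
  have hsqrt : 0 < (√2 - 1) * δ := mul_pos (sub_pos.2 Real.one_lt_sqrt_two) hδ
  have hden : 0 < b + δ - s := by linarith
  have hquot : (b + ρ) / (b + δ - s) - 1 = (ρ + s - δ) / (b + δ - s) := by
    rw [div_sub_one hden.ne']; ring_nf
  rw [hquot, ← mul_div_assoc]
  rcases hsδ.eq_or_lt with rfl | hlt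
  · have hρ : ρ = 0 := by simpa using h
    simpa [hρ] using div_pos hsqrt hb
  · calc (ρ + s - δ) / (b + δ - s) ≤ (√2 - 1) * δ / (b + δ - s) := by gcongr
      _ < (√2 - 1) * δ / b := div_lt_div_of_pos_left hsqrt hb (by linarith)

theorem stability_quotient_euclidean_general {E : Type*} [NormedAddCommGroup E]
    [InnerProductSpace ℝ E] [CompleteSpace E] {κ ε : ℝ} (hκ : 0 < κ) (hε : 0 < ε) {D : Set E}
    (hD : IsClosed D) (hDne : D.Nonempty) (hDuniv : D ≠ univ)
    (hsand : IsBallSandwiched (1 / κ) (1 / ((1 + ε) * κ)) D) :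
    ∃ (o : E) (r R : ℝ), 0 < r ∧ r ≤ R ∧ closedBall o r ⊆ D ∧ D ⊆ closedBall o R ∧
      R / r - 1 < (√2 - 1) * ε := by
  obtain ⟨x, hx⟩ := hDne
  obtain ⟨y, hy⟩ := (ne_univ_iff_exists_notMem D).1 hDuniv
  have : Nontrivial E := ⟨x, y, fun h => hy (h ▸ hx)⟩
  set b := 1 / ((1 + ε) * κ)
  have hb : 0 < b := by positivity
  have hκb : 1 / κ = b + ε * b := by simp only [b]; field_simp
  have hδ : 0 < ε * b := mul_pos hε hb
  obtain ⟨o, ρ, s, hρ, hs, hρs, hin, hout⟩ := hsand.exists_closedBall_subset_subset_closedBall hb hD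
    (nonempty_frontier_iff.2 ⟨⟨x, hx⟩, hDuniv⟩)
  rw [hκb] at hin hρs
  rw [add_sub_cancel_left] at hρs
  have hsδ : s ≤ ε * b := le_of_sq_le_sq (by linarith [sq_nonneg ρ]) hδ.le
  refine ⟨o, b + ε * b - s, b + ρ, by linarith, ?_, hin, hout, ?_⟩
  · linarith [le_add_of_sq_add_sq_eq hρ hs hρs]
  · simpa [hb.ne'] using add_div_add_sub_sub_one_lt hb hδ hρs

end BallSandwich

/-- Stability of almost umbilical hypersurfaces in Euclidean space (quotient form):
a κ,(1+ε)κ-convex domain fits in a spherical shell with R/r − 1 < (√2 − 1)·ε. -/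
theorem stability_quotient_euclidean
    {n : ℕ} (hn : 2 ≤ n) (κ ε : ℝ) (hκ : 0 < κ) (hε : 0 < ε)
    (D : Set (EuclideanSpace ℝ (Fin n)))
    (hDcomp : IsCompact D) (hDconv : Convex ℝ D) (hDint : (interior D).Nonempty)
    (hsand : ∀ p ∈ frontier D, ∃ x₁ x₂ : EuclideanSpace ℝ (Fin n),
      dist x₁ p = 1 / κ ∧ dist x₂ p = 1 / ((1 + ε) * κ) ∧
      Metric.closedBall x₂ (1 / ((1 + ε) * κ)) ⊆ D ∧ D ⊆ Metric.closedBall x₁ (1 / κ)) :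
    ∃ (o : EuclideanSpace ℝ (Fin n)) (r R : ℝ), 0 < r ∧ r ≤ R ∧
      Metric.closedBall o r ⊆ D ∧ D ⊆ Metric.closedBall o R ∧
      R / r - 1 < (Real.sqrt 2 - 1) * ε := by
  have : Nontrivial (Fin n) := Fin.nontrivial_iff_two_le.2 hn
  exact stability_quotient_euclidean_general hκ hε hDcomp.isClosed (hDint.mono interior_subset)
    hDcomp.ne_univ hsand
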